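/- arXiv:0808.0667 — 3 statements merged into one kernel-verified Lean document; each statement's English description precedes it below -/
import Mathlib

section
/- Let L be a real Lie algebra and B : L → L → ℝ a symmetric bilinear form that is invariant, i.e. B(⁅x,y⁆, z) = B(x, ⁅y,z⁆) for all x, y, z in L. Let φ₁, φ₂, φ₃ : Fin 4 → Fin 4 → L be antisymmetric matrices (φ i j = −φ j i). Then Σ_{a,j,k : Fin 4} B(φ₁ j k, ⁅φ₂ a j, φ₃ a k⁆) = Σ_{a,j,k : Fin 4} B(φ₃ j k, ⁅φ₁ a j, φ₂ a k⁆). -/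
/-- Cyclic-symmetry assertion of Lemma 3.1: for an invariant symmetric bilinear
form `B` on a real Lie algebra `L` and antisymmetric matrices `φ₁ φ₂ φ₃` of
components of `L`-valued 2-forms,
`∑ ⟨φ₁, i_{e_a}φ₂ ∧ i_{e_a}φ₃⟩ = ∑ ⟨φ₃, i_{e_a}φ₁ ∧ i_{e_a}φ₂⟩`. -/
theorem cyclic_symmetry_triple_product
    {L : Type*} [LieRing L] [LieAlgebra ℝ L]
    (B : L →ₗ[ℝ] L →ₗ[ℝ] ℝ)
    (hsym : ∀ x y, B x y = B y x)
    (hinv : ∀ x y z, B ⁅x, y⁆ z = B x ⁅y, z⁆)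
    (φ₁ φ₂ φ₃ : Fin 4 → Fin 4 → L)
    (h1 : ∀ i j, φ₁ i j = -φ₁ j i)
    (h2 : ∀ i j, φ₂ i j = -φ₂ j i)
    (h3 : ∀ i j, φ₃ i j = -φ₃ j i) :
    ∑ a : Fin 4, ∑ j : Fin 4, ∑ k : Fin 4, B (φ₁ j k) ⁅φ₂ a j, φ₃ a k⁆ =
    ∑ a : Fin 4, ∑ j : Fin 4, ∑ k : Fin 4, B (φ₃ j k) ⁅φ₁ a j, φ₂ a k⁆ := by
  have key : ∀ a j k : Fin 4, B (φ₁ j k) ⁅φ₂ a j, φ₃ a k⁆ =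
      B (φ₃ k a) ⁅φ₁ j k, φ₂ j a⁆ := by
    intro a j k
    rw [← hinv, hsym, h3 a k, h2 a j]
    simp only [lie_neg, map_neg, LinearMap.neg_apply, neg_neg]
  simp only [key]
  rw [Finset.sum_comm]
  refine Finset.sum_congr rfl fun j _ => ?_
  rw [Finset.sum_comm]
end

section
/- Let L be a Lie ring, B : L → L → ℝ any bilinear form, F⁺ : Fin 4 → Fin 4 → L antisymmetric and self-dual (F⁺ 0 1 = F⁺ 2 3, F⁺ 0 2 = F⁺ 3 1, F⁺ 0 3 = F⁺ 1 2), and F⁻ : Fin 4 → Fin 4 → L antisymmetric and anti-self-dual (F⁻ 0 1 = −F⁻ 2 3, F⁻ 0 2 = −F⁻ 3 1, F⁻ 0 3 = −F⁻ 1 2). Then Σ_{a,j,k : Fin 4} B(F⁺ j k, ⁅F⁻ a j, F⁻ a k⁆) = 0. -/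
/-- The pairing of a self-dual form with `∑ a, i_{e_a}F⁻ ∧ i_{e_a}F⁻`
(which is anti-self-dual) vanishes:
`∑_{a,j,k} B(F⁺ j k, ⁅F⁻ a j, F⁻ a k⁆) = 0`. -/
theorem selfDual_pair_antiSelfDual_bracket_sum_eq_zero
    {L : Type*} [LieRing L] (B : L →+ L →+ ℝ)
    (Fp Fm : Fin 4 → Fin 4 → L)
    (hp : ∀ i j, Fp i j = -Fp j i)
    (hp01 : Fp 0 1 = Fp 2 3) (hp02 : Fp 0 2 = Fp 3 1) (hp03 : Fp 0 3 = Fp 1 2)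
    (hm : ∀ i j, Fm i j = -Fm j i)
    (hm01 : Fm 0 1 = -Fm 2 3) (hm02 : Fm 0 2 = -Fm 3 1) (hm03 : Fm 0 3 = -Fm 1 2) :
    ∑ a : Fin 4, ∑ j : Fin 4, ∑ k : Fin 4, B (Fp j k) ⁅Fm a j, Fm a k⁆ = 0 := by
  -- diagonal entries are 2-torsion, hence invisible to the real-valued form
  have hpd : ∀ i y, B (Fp i i) y = 0 := by
    intro i y
    have h := congrArg (fun t => B t y) (hp i i)
    simp only [map_neg, AddMonoidHom.neg_apply] at h
    linarith
  have hd1 : ∀ (x : L) (i : Fin 4) (y : L), B x ⁅Fm i i, y⁆ = 0 := by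
    intro x i y
    have h := congrArg (fun t => B x ⁅t, y⁆) (hm i i)
    simp only [neg_lie, map_neg] at h
    linarith
  have hd2 : ∀ (x : L) (i : Fin 4) (y : L), B x ⁅y, Fm i i⁆ = 0 := by
    intro x i y
    rw [← lie_skew, map_neg, hd1, neg_zero]
  have hs : ∀ x y z : L, B x ⁅y, z⁆ = - B x ⁅z, y⁆ := by
    intro x y z
    rw [← lie_skew, map_neg]
  have p32 : Fp 3 2 = -Fp 0 1 := by rw [hp 3 2, hp01]
  have p13 : Fp 1 3 = -Fp 0 2 := by rw [hp 1 3, hp02]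
  have p21 : Fp 2 1 = -Fp 0 3 := by rw [hp 2 1, hp03]
  have m23 : Fm 2 3 = -Fm 0 1 := by rw [hm01, neg_neg]
  have m31 : Fm 3 1 = -Fm 0 2 := by rw [hm02, neg_neg]
  have m12 : Fm 1 2 = -Fm 0 3 := by rw [hm03, neg_neg]
  have m32 : Fm 3 2 = Fm 0 1 := by rw [hm 3 2, hm01]
  have m13 : Fm 1 3 = Fm 0 2 := by rw [hm 1 3, hm02]
  have m21 : Fm 2 1 = Fm 0 3 := by rw [hm 2 1, hm03]
  simp only [Fin.sum_univ_four, hpd, hd1, hd2, hp 1 0, hp 2 0, hp 3 0, hm 1 0, hm 2 0, hm 3 0,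
    ← hp01, ← hp02, ← hp03, p32, p13, p21, m23, m31, m12, m32, m13, m21,
    neg_lie, lie_neg, map_neg, AddMonoidHom.neg_apply, lie_self, map_zero]
  have e1 := hs (Fp 0 1) (Fm 0 2) (Fm 0 3)
  have e2 := hs (Fp 0 2) (Fm 0 1) (Fm 0 3)
  have e3 := hs (Fp 0 3) (Fm 0 1) (Fm 0 2)
  have e4 := hs (Fp 0 1) (Fm 0 1) (Fm 0 2)
  have e5 := hs (Fp 0 1) (Fm 0 1) (Fm 0 3)
  have e6 := hs (Fp 0 2) (Fm 0 1) (Fm 0 2)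
  have e7 := hs (Fp 0 2) (Fm 0 2) (Fm 0 3)
  have e8 := hs (Fp 0 3) (Fm 0 1) (Fm 0 3)
  have e9 := hs (Fp 0 3) (Fm 0 2) (Fm 0 3)
  linarith
end

section
/- Let L be a real Lie algebra and let F : Fin 3 → Fin 3 → L be antisymmetric (F i j = −F j i). Define ψ : Fin 3 → L by ψ 0 = F 1 2, ψ 1 = F 2 0, ψ 2 = F 0 1 (the components of the Hodge dual 1-form ∗F in three dimensions). Suppose that for every t : Fin 3 one has Σ_{s : Fin 3} ⁅ψ s, F s t⁆ = 0. Then ⁅F i j, F s t⁆ = 0 for all i, j, s, t : Fin 3, i.e. the components of F pairwise commute. -/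
/-- Algebraic step in the proof of Theorem 1.3: in three dimensions, if
`ψ = ∗F` (so `ψ 0 = F 1 2`, `ψ 1 = F 2 0`, `ψ 2 = F 0 1`) and
`∑ s, ⁅ψ s, F s t⁆ = 0` for all `t`, then the components of `F` pairwise
commute. -/
theorem threeDim_curvature_components_commute
    {L : Type*} [LieRing L] [LieAlgebra ℝ L]
    (F : Fin 3 → Fin 3 → L)
    (hanti : ∀ i j, F i j = -F j i)
    (ψ : Fin 3 → L)
    (hψ0 : ψ 0 = F 1 2) (hψ1 : ψ 1 = F 2 0) (hψ2 : ψ 2 = F 0 1)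
    (h : ∀ t : Fin 3, ∑ s : Fin 3, ⁅ψ s, F s t⁆ = 0) :
    ∀ i j s t : Fin 3, ⁅F i j, F s t⁆ = 0 := by
  have two : ∀ x : L, x + x = 0 → x = 0 := by
    intro x hx
    have h2 : (2 : ℝ) • x = 0 := by rw [two_smul, hx]
    exact (smul_eq_zero.mp h2).resolve_left two_ne_zero
  have diag : ∀ i, F i i = 0 := by
    intro i
    apply two
    nth_rewrite 1 [hanti i i]
    exact neg_add_cancel _
  have e10 : F 1 0 = -F 0 1 := hanti 1 0
  have e21 : F 2 1 = -F 1 2 := hanti 2 1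
  have e02 : F 0 2 = -F 2 0 := hanti 0 2
  have h0 := h 0
  have h1 := h 1
  have h2 := h 2
  simp only [Fin.sum_univ_three, hψ0, hψ1, hψ2, diag, e10, e21, e02, lie_zero, lie_neg,
    zero_add, add_zero] at h0 h1 h2
  have cb : ⁅F 0 1, F 2 0⁆ = 0 := by
    apply two
    rwa [lie_skew] at h0
  have ac : ⁅F 1 2, F 0 1⁆ = 0 := by
    apply two
    rwa [lie_skew] at h1
  have ba : ⁅F 2 0, F 1 2⁆ = 0 := by
    apply two
    rwa [lie_skew] at h2
  have bc : ⁅F 2 0, F 0 1⁆ = 0 := by rw [← lie_skew, cb, neg_zero]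
  have ca : ⁅F 0 1, F 1 2⁆ = 0 := by rw [← lie_skew, ac, neg_zero]
  have ab : ⁅F 1 2, F 2 0⁆ = 0 := by rw [← lie_skew, ba, neg_zero]
  intro i j s t
  fin_cases i <;> fin_cases j <;> fin_cases s <;> fin_cases t <;>
    simp [diag, e10, e21, e02, cb, ac, ba, bc, ca, ab]
end
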